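/- Let (S,d) be a complete separable metric space in which any two elements have distance at most one. Then for all μ,ν ∈ M_{≤1}(S): BL(μ,ν) ≤ K(μ,ν) ≤ W(μ,ν) ≤ 2·P(μ,ν) ≤ 4·√(BL(μ,ν)). -/

import Mathlib

open MeasureTheory Set

noncomputable section

/-- The open `ε`-thickening `A^ε` of a set w.r.t. a distance function. -/
def thicken {X : Type _} (d : X → X → ℝ) (ε : ℝ) (A : Set X) : Set X :=
  {y | ∃ x ∈ A, d x y < ε}

/-- The Prokhorov distance of two measures w.r.t. a distance function `d`. -/
def prokhorovDist {X : Type _} [MeasurableSpace X] (d : X → X → ℝ)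
    (μ ν : Measure X) : ℝ :=
  sInf {ε : ℝ | 0 < ε ∧ ∀ A : Set X, MeasurableSet A →
    μ A ≤ ν (thicken d ε A) + ENNReal.ofReal ε ∧
    ν A ≤ μ (thicken d ε A) + ENNReal.ofReal ε}


def uwAux {X : Type _} [MeasurableSpace X] (d : X → X → ℝ) (μ ν : Measure X) : ℝ :=
  (μ Set.univ).toReal - (ν Set.univ).toReal +
    sInf {r : ℝ | ∃ γ : Measure (X × X), γ Set.univ ≤ 1 ∧
      γ.map Prod.fst ≤ μ ∧ γ.map Prod.snd = ν ∧ r = ∫ p, d p.1 p.2 ∂γ}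

open Classical in
/-- The unbalanced Wasserstein distance w.r.t. a distance function `d`:
`‖μ‖ - ‖ν‖` plus the optimal transport cost over sub-couplings, where w.l.o.g.
`‖μ‖ ≥ ‖ν‖`. -/
def uwDist {X : Type _} [MeasurableSpace X] (d : X → X → ℝ) (μ ν : Measure X) : ℝ :=
  if ν Set.univ ≤ μ Set.univ then uwAux d μ ν else uwAux d ν μ

/-- The classical Wasserstein distance (over couplings) w.r.t. a cost `d`. -/
def wassersteinDist {X : Type _} [MeasurableSpace X] (d : X → X → ℝ)
    (μ ν : Measure X) : ℝ :=
  sInf {r : ℝ | ∃ γ : Measure (X × X),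
    γ.map Prod.fst = μ ∧ γ.map Prod.snd = ν ∧ r = ∫ p, d p.1 p.2 ∂γ}


/-- The Kantorovich–Rubinshtein distance: the supremum of `|∫ f dμ - ∫ f dν|` over
all `f` with Lipschitz constant at most one and sup norm at most one. -/
def krDist {S : Type} [MetricSpace S] [MeasurableSpace S] (μ ν : Measure S) : ℝ :=
  sSup {r : ℝ | ∃ f : S → ℝ, LipschitzWith 1 f ∧ (∀ x, |f x| ≤ 1) ∧
    r = |∫ x, f x ∂μ - ∫ x, f x ∂ν|}

/-- The bounded-Lipschitz distance: the supremum of `|∫ f dμ - ∫ f dν|` over all `f`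
with `‖f‖_L + ‖f‖_∞ ≤ 1`. -/
def blDist {S : Type} [MetricSpace S] [MeasurableSpace S] (μ ν : Measure S) : ℝ :=
  sSup {r : ℝ | ∃ (f : S → ℝ) (a b : NNReal), LipschitzWith a f ∧ (∀ x, |f x| ≤ b) ∧
    (a : ℝ) + (b : ℝ) ≤ 1 ∧ r = |∫ x, f x ∂μ - ∫ x, f x ∂ν|}

/-!
For `W ≤ 2P`, an approximate form of Strassen's theorem suffices. Cut the space, up to small
mass, into finitely many pieces of small diameter and round the masses of the pieces to multiples
of a small unit. The Prokhorov inequalities then become Hall's condition with a deficiency, and a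
matching of the units yields a measure with marginals below `μ` and `ν` that moves all but about
`ε` of the mass of `μ` over distances of about `ε` at most. The rest of `ν` can be served
arbitrarily, at a cost of at most one per unit of mass.

For `K ≤ W`, compare `μ` with the part of it that is transported and that part with `ν`. For
`P ≤ 2√BL`, test with a function that is one on `A`, vanishes outside `A^ε` and has Lipschitz
constant `ε⁻¹`; its bounded-Lipschitz norm is at most `1 + ε⁻¹`.
-/

open scoped ENNReal NNReal ProbabilityTheory

section FiniteTransport

open Finset

variable {ι κ α : Type*}

theorem exists_injective_of_card_le_card_biUnion_add [Fintype ι] [DecidableEq α]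
    (t : ι → Finset α) (D : ℕ) (hall : ∀ s : Finset ι, #s ≤ #(s.biUnion t) + D) :
    ∃ (s : Finset ι) (f : s → α),
      Function.Injective f ∧ (∀ i : s, f i ∈ t i) ∧ Fintype.card ι ≤ #s + D := by
  classical
  -- Adding `D` dummies adjacent to every `i` restores Hall's condition.
  let t' : ι → Finset (α ⊕ Fin D) := fun i => (t i).disjSum univ
  have hall' (s : Finset ι) : #s ≤ #(s.biUnion t') := by
    rcases s.eq_empty_or_nonempty with rfl | ⟨i₀, hi₀⟩
    · simp
    have hsub : (s.biUnion t).disjSum univ ⊆ s.biUnion t' := by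
      intro y hy
      rcases mem_disjSum.1 hy with ⟨a, ha, rfl⟩ | ⟨k, -, rfl⟩
      · simpa [t'] using ha
      · exact mem_biUnion.2 ⟨i₀, hi₀, by simp [t']⟩
    calc #s ≤ #(s.biUnion t) + D := hall s
      _ = #((s.biUnion t).disjSum (univ : Finset (Fin D))) := by simp [card_disjSum]
      _ ≤ #(s.biUnion t') := Finset.card_le_card hsub
  obtain ⟨F, hF_inj, hF_mem⟩ := (all_card_le_biUnion_card_iff_exists_injective t').1 hall'
  let s : Finset ι := {i | (F i).isLeft}
  have hs (i : s) : (F i).isLeft := (mem_filter.1 i.2).2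
  have hF_eq (i : s) : F i = Sum.inl ((F i).getLeft (hs i)) := (Sum.inl_getLeft _ _).symm
  refine ⟨s, fun i => (F i).getLeft (hs i), fun i j hij => ?_, fun i => ?_, ?_⟩
  · exact Subtype.ext (hF_inj (by rw [hF_eq i, hF_eq j]; exact congrArg Sum.inl hij))
  · exact inl_mem_disjSum.1 (hF_eq i ▸ hF_mem i)
  · have hcompl : #sᶜ ≤ #((univ : Finset (Fin D)).map ⟨_, Sum.inr_injective (α := α)⟩) :=
      card_le_card_of_injOn F (fun i hi => by
        obtain ⟨k, hk⟩ : ∃ k, F i = Sum.inr k := Sum.isRight_iff.1 (by simpa [s] using hi)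
        simp [hk]) hF_inj.injOn
    rw [card_map, card_univ, Fintype.card_fin] at hcompl
    rw [← card_add_card_compl s]
    lia

theorem sum_floor_mul_le_sum_floor_mul_add {a : ι → ℝ≥0} {b : κ → ℝ≥0} {D : ℝ≥0}
    {s : Finset ι} {t : Finset κ} (h : ∑ i ∈ s, a i ≤ ∑ j ∈ t, b j + D) (c : ℝ≥0) :
    ∑ i ∈ s, ⌊c * a i⌋₊ ≤ ∑ j ∈ t, ⌊c * b j⌋₊ + (⌈c * D⌉₊ + #t) := by
  rw [← Nat.cast_le (α := ℝ≥0)]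
  push_cast
  calc ∑ i ∈ s, (⌊c * a i⌋₊ : ℝ≥0) ≤ ∑ i ∈ s, c * a i := by
        gcongr; exact Nat.floor_le (by positivity)
    _ ≤ c * (∑ j ∈ t, b j + D) := by rw [← mul_sum]; gcongr
    _ = ∑ j ∈ t, c * b j + c * D := by rw [mul_add, mul_sum]
    _ ≤ ∑ j ∈ t, (⌊c * b j⌋₊ + 1 : ℝ≥0) + ⌈c * D⌉₊ := by
        gcongr
        · exact (Nat.lt_floor_add_one _).le
        · exact Nat.le_ceil _
    _ = ∑ j ∈ t, (⌊c * b j⌋₊ : ℝ≥0) + (⌈c * D⌉₊ + #t) := by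
        rw [sum_add_distrib, sum_const, nsmul_one]; ring

theorem sum_natCast_div_le_of_sum_le_floor_mul {c x : ℝ≥0} (hc : 0 < c) {s : Finset ι} {n : ι → ℕ}
    (h : ∑ i ∈ s, n i ≤ ⌊c * x⌋₊) : ∑ i ∈ s, (n i : ℝ≥0) / c ≤ x := by
  rw [← sum_div, div_le_iff₀' hc]
  calc ∑ i ∈ s, (n i : ℝ≥0) ≤ ⌊c * x⌋₊ := mod_cast h
    _ ≤ c * x := Nat.floor_le (by positivity)

/-- A partial transport plan from supplies `a` to demands `b`: an amount `g i j` may be shipped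
from `i` to `j` only along the relation `r`, no supply is exceeded and no demand is overfilled.
The amounts lie in an arbitrary ordered monoid, so that integral and real plans are both covered. -/
structure IsTransportPlan [Fintype ι] [Fintype κ] {M : Type*} [AddCommMonoid M] [LE M]
    (r : ι → κ → Prop) (a : ι → M) (b : κ → M) (g : ι → κ → M) : Prop where
  rel_of_ne_zero : ∀ i j, g i j ≠ 0 → r i j
  row_sum_le : ∀ i, ∑ j, g i j ≤ a i
  col_sum_le : ∀ j, ∑ i, g i j ≤ b j

variable [Fintype ι] [Fintype κ] {r : ι → κ → Prop}

open Classical in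
theorem exists_nat_isTransportPlan_of_injective {a : ι → ℕ} {b : κ → ℕ}
    {s : Finset (Σ i, Fin (a i))} {f : s → Σ j, Fin (b j)} (hf_inj : Function.Injective f)
    (hf_rel : ∀ x : s, r x.1.1 (f x).1) :
    ∃ n : ι → κ → ℕ, IsTransportPlan r a b n ∧ ∑ i, ∑ j, n i j = #s := by
  let n : ι → κ → ℕ := fun i j => #{x : s | x.1.1 = i ∧ (f x).1 = j}
  have row_sum (i : ι) : ∑ j, n i j = #{x : s | x.1.1 = i} := by
    rw [card_eq_sum_card_fiberwise (f := fun x : s => (f x).1) (t := univ)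
      (fun _ _ => mem_univ _)]
    simp only [n, filter_filter]
  have col_sum (j : κ) : ∑ i, n i j = #{x : s | (f x).1 = j} := by
    rw [card_eq_sum_card_fiberwise (f := fun x : s => x.1.1) (t := univ) (fun _ _ => mem_univ _)]
    simp only [n, filter_filter, and_comm]
  refine ⟨n, ⟨fun i j hn => ?_, fun i => ?_, fun j => ?_⟩, ?_⟩
  · obtain ⟨x, hx⟩ := card_ne_zero.1 hn
    obtain ⟨rfl, rfl⟩ := (mem_filter.1 hx).2
    exact hf_rel x
  · calc ∑ j, n i j = #{x : s | x.1.1 = i} := row_sum i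
      _ ≤ #(({i} : Finset ι).sigma fun i => (univ : Finset (Fin (a i)))) :=
        card_le_card_of_injOn Subtype.val (fun x hx => by simpa using hx)
          Subtype.val_injective.injOn
      _ = a i := by simp
  · calc ∑ i, n i j = #{x : s | (f x).1 = j} := col_sum j
      _ ≤ #(({j} : Finset κ).sigma fun j => (univ : Finset (Fin (b j)))) :=
        card_le_card_of_injOn f (fun x hx => by simpa using hx) hf_inj.injOn
      _ = b j := by simp
  · calc ∑ i, ∑ j, n i j = ∑ i, #{x : s | x.1.1 = i} := by simp_rw [row_sum]
      _ = #(univ : Finset s) :=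
        (card_eq_sum_card_fiberwise (f := fun x : s => x.1.1) fun _ _ => mem_univ _).symm
      _ = #s := by simp

open Classical in
theorem exists_nat_isTransportPlan {a : ι → ℕ} {b : κ → ℕ} {D : ℕ}
    (hall : ∀ s : Finset ι, ∑ i ∈ s, a i ≤ ∑ j with ∃ i ∈ s, r i j, b j + D) :
    ∃ n : ι → κ → ℕ, IsTransportPlan r a b n ∧ ∑ i, a i ≤ ∑ i, ∑ j, n i j + D := by
  -- Split `i` into `a i` unit supplies and `j` into `b j` unit demands, and match them.
  let t : (Σ i, Fin (a i)) → Finset (Σ j, Fin (b j)) := fun x => {y | r x.1 y.1}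
  have hall_unit (s : Finset (Σ i, Fin (a i))) : #s ≤ #(s.biUnion t) + D := by
    let I := s.image Sigma.fst
    have hs : s ⊆ I.sigma fun _ => univ := fun x hx =>
      mem_sigma.2 ⟨mem_image_of_mem _ hx, mem_univ _⟩
    have ht : (univ.filter fun j => ∃ i ∈ I, r i j).sigma (fun _ => univ) ⊆ s.biUnion t := by
      rintro ⟨j, l⟩ hy
      simpa [t, I] using hy
    calc #s ≤ ∑ i ∈ I, a i := by simpa [card_sigma] using Finset.card_le_card hs
      _ ≤ ∑ j with ∃ i ∈ I, r i j, b j + D := hall I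
      _ ≤ #(s.biUnion t) + D := by
        gcongr
        simpa only [card_sigma, card_univ, Fintype.card_fin] using Finset.card_le_card ht
  obtain ⟨s, f, hf_inj, hf_mem, hs⟩ := exists_injective_of_card_le_card_biUnion_add t D hall_unit
  obtain ⟨n, hn, hn_total⟩ := exists_nat_isTransportPlan_of_injective (r := r) hf_inj
    fun x => (mem_filter.1 (hf_mem x)).2
  refine ⟨n, hn, ?_⟩
  simpa [hn_total] using hs

open Classical in
theorem exists_nnreal_isTransportPlan {a : ι → ℝ≥0} {b : κ → ℝ≥0} {D : ℝ≥0}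
    (hall : ∀ s : Finset ι, ∑ i ∈ s, a i ≤ ∑ j with ∃ i ∈ s, r i j, b j + D)
    {δ : ℝ≥0} (hδ : 0 < δ) :
    ∃ g : ι → κ → ℝ≥0, IsTransportPlan r a b g ∧ ∑ i, a i ≤ ∑ i, ∑ j, g i j + D + δ := by
  -- Round all masses to multiples of `1 / c`; each rounding costs at most one unit.
  let c : ℝ≥0 := (Fintype.card ι + Fintype.card κ + 1) / δ
  have hc : 0 < c := by positivity
  have hcδ : Fintype.card ι + Fintype.card κ + 1 = c * δ := (div_mul_cancel₀ _ hδ.ne').symm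
  obtain ⟨n, hn, hn_total⟩ := exists_nat_isTransportPlan (r := r) (a := fun i => ⌊c * a i⌋₊)
    (b := fun j => ⌊c * b j⌋₊) (D := ⌈c * D⌉₊ + Fintype.card κ) fun s =>
      (sum_floor_mul_le_sum_floor_mul_add (hall s) c).trans (by gcongr; exact card_le_univ _)
  refine ⟨fun i j => n i j / c,
    ⟨fun i j hg => hn.rel_of_ne_zero i j fun h => hg (by simp [h]),
      fun i => sum_natCast_div_le_of_sum_le_floor_mul hc (hn.row_sum_le i),
      fun j => sum_natCast_div_le_of_sum_le_floor_mul hc (hn.col_sum_le j)⟩, ?_⟩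
  refine le_of_mul_le_mul_left ?_ hc
  calc c * ∑ i, a i ≤ ∑ i, (⌊c * a i⌋₊ + 1 : ℝ≥0) := by
        rw [mul_sum]; gcongr; exact (Nat.lt_floor_add_one _).le
    _ = ((∑ i, ⌊c * a i⌋₊ : ℕ) : ℝ≥0) + Fintype.card ι := by rw [sum_add_distrib]; simp
    _ ≤ ((∑ i, ∑ j, n i j + (⌈c * D⌉₊ + Fintype.card κ) : ℕ) : ℝ≥0) + Fintype.card ι := by
        gcongr
    _ ≤ ∑ i, ∑ j, (n i j : ℝ≥0) + (c * D + 1 + Fintype.card κ) + Fintype.card ι := by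
        push_cast
        gcongr
        exact (Nat.ceil_lt_add_one (by positivity)).le
    _ = ∑ i, ∑ j, (n i j : ℝ≥0) + c * D + (Fintype.card ι + Fintype.card κ + 1) := by ring
    _ = c * (∑ i, ∑ j, (n i j : ℝ≥0) / c + D + δ) := by
        rw [hcδ]; simp_rw [← sum_div]; field_simp

end FiniteTransport

section Subcoupling

variable {X Y : Type*} [MeasurableSpace X] [MeasurableSpace Y]
  {μ : Measure X} {ν : Measure Y} {γ : Measure (X × Y)}

/-- A subcoupling of `μ` and `ν`: a joint measure whose marginals are dominated by `μ` and `ν`,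
i.e. a plan transporting part of `μ` onto part of `ν`. -/
structure IsSubcoupling (γ : Measure (X × Y)) (μ : Measure X) (ν : Measure Y) : Prop where
  fst_le : γ.fst ≤ μ
  snd_le : γ.snd ≤ ν

theorem IsSubcoupling.measure_univ_le_left (hγ : IsSubcoupling γ μ ν) : γ univ ≤ μ univ :=
  Measure.fst_univ (ρ := γ) ▸ hγ.fst_le univ

theorem IsSubcoupling.measure_univ_le_right (hγ : IsSubcoupling γ μ ν) : γ univ ≤ ν univ :=
  Measure.snd_univ (ρ := γ) ▸ hγ.snd_le univ

theorem exists_fst_le_snd_eq [IsFiniteMeasure μ] (hle : ν univ ≤ μ univ) :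
    ∃ γ : Measure (X × Y), γ.fst ≤ μ ∧ γ.snd = ν := by
  have : IsFiniteMeasure ν := ⟨hle.trans_lt (measure_lt_top μ univ)⟩
  rcases eq_or_ne μ 0 with rfl | hμ
  · have hν : ν = 0 := by simpa using hle
    exact ⟨0, by simp, by simp [hν]⟩
  have hμ_univ : μ univ ≠ 0 := by simpa using hμ
  refine ⟨(μ univ)⁻¹ • μ.prod ν, ?_, ?_⟩
  · rw [Measure.fst, Measure.map_smul, Measure.map_fst_prod, smul_smul]
    calc ((μ univ)⁻¹ * ν univ) • μ ≤ (1 : ℝ≥0∞) • μ := by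
          gcongr
          exact (ENNReal.inv_mul_le_iff hμ_univ (measure_ne_top _ _)).2 (by simpa using hle)
      _ = μ := one_smul _ _
  · rw [Measure.snd, Measure.map_smul, Measure.map_snd_prod, smul_smul,
      ENNReal.inv_mul_cancel hμ_univ (measure_ne_top _ _), one_smul]

theorem IsSubcoupling.exists_add_fst_le_snd_eq [IsFiniteMeasure μ]
    (hγ : IsSubcoupling γ μ ν) (hle : ν univ ≤ μ univ) :
    ∃ ρ : Measure (X × Y), (γ + ρ).fst ≤ μ ∧ (γ + ρ).snd = ν := by
  have : IsFiniteMeasure ν := ⟨hle.trans_lt (measure_lt_top μ univ)⟩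
  have : IsFiniteMeasure γ := ⟨hγ.measure_univ_le_left.trans_lt (measure_lt_top μ univ)⟩
  obtain ⟨ρ, hρ_fst, hρ_snd⟩ : ∃ ρ : Measure (X × Y), ρ.fst ≤ μ - γ.fst ∧ ρ.snd = ν - γ.snd := by
    refine exists_fst_le_snd_eq ?_
    rw [Measure.sub_apply .univ hγ.fst_le, Measure.sub_apply .univ hγ.snd_le,
      Measure.fst_univ, Measure.snd_univ]
    gcongr
  refine ⟨ρ, ?_, ?_⟩
  · calc (γ + ρ).fst = ρ.fst + γ.fst := by rw [Measure.fst_add, add_comm]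
      _ ≤ μ - γ.fst + γ.fst := by gcongr
      _ = μ := Measure.sub_add_cancel_of_le hγ.fst_le
  · rw [Measure.snd_add, hρ_snd, add_comm, Measure.sub_add_cancel_of_le hγ.snd_le]

end Subcoupling

section BlockCoupling

variable {X Y : Type*} [MeasurableSpace X] [MeasurableSpace Y]
  {μ : Measure X} {ν : Measure Y} {ι κ : Type*} [Fintype ι] [Fintype κ]
  {B : ι → Set X} {C : κ → Set Y} {g : ι → κ → ℝ≥0∞}

/-- The joint measure that transports the mass `g i j` from the block `B i` to the block `C j`,
independently inside each pair of blocks. If `μ (B i) = 0` then `μ[|B i] = 0`, so that no mass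
leaves the block `B i`. -/
def blockCoupling (μ : Measure X) (ν : Measure Y) (B : ι → Set X) (C : κ → Set Y)
    (g : ι → κ → ℝ≥0∞) : Measure (X × Y) :=
  ∑ i, ∑ j, g i j • (μ[|B i]).prod (ν[|C j])

theorem blockCoupling_prod (s : Set X) (t : Set Y) :
    blockCoupling μ ν B C g (s ×ˢ t) = ∑ i, ∑ j, g i j * (μ[s | B i] * ν[t | C j]) := by
  simp [blockCoupling, Measure.finsetSum_apply, Measure.prod_prod]

theorem sum_mul_cond_le [IsFiniteMeasure μ] (hB : ∀ i, MeasurableSet (B i))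
    (hB_disj : Pairwise (Function.onFun Disjoint B)) {w : ι → ℝ≥0∞} (hw : ∀ i, w i ≤ μ (B i))
    {s : Set X} (hs : MeasurableSet s) : ∑ i, w i * μ[s | B i] ≤ μ s := by
  calc ∑ i, w i * μ[s | B i] ≤ ∑ i, μ (B i ∩ s) := by
        gcongr with i
        rw [← ProbabilityTheory.cond_mul_eq_inter (hB i), mul_comm]
        gcongr
        exact hw i
    _ ≤ μ (⋃ i, B i ∩ s) := by
        rw [measure_iUnion
          (fun i j hij => (hB_disj hij).mono inter_subset_left inter_subset_left)
          (fun i => (hB i).inter hs), tsum_fintype]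
    _ ≤ μ s := measure_mono (iUnion_subset fun _ => inter_subset_right)

theorem isSubcoupling_blockCoupling [IsFiniteMeasure μ] [IsFiniteMeasure ν]
    (hB : ∀ i, MeasurableSet (B i)) (hB_disj : Pairwise (Function.onFun Disjoint B))
    (hC : ∀ j, MeasurableSet (C j)) (hC_disj : Pairwise (Function.onFun Disjoint C))
    (hrow : ∀ i, ∑ j, g i j ≤ μ (B i)) (hcol : ∀ j, ∑ i, g i j ≤ ν (C j)) :
    IsSubcoupling (blockCoupling μ ν B C g) μ ν where
  fst_le := Measure.le_iff.2 fun s hs => by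
    calc (blockCoupling μ ν B C g).fst s
        = ∑ i, ∑ j, g i j * (μ[s | B i] * ν[univ | C j]) := by
          rw [Measure.fst_apply hs, ← prod_univ, blockCoupling_prod]
      _ ≤ ∑ i, ∑ j, g i j * (μ[s | B i] * 1) := by gcongr; exact prob_le_one
      _ = ∑ i, (∑ j, g i j) * μ[s | B i] := by simp_rw [mul_one, Finset.sum_mul]
      _ ≤ μ s := sum_mul_cond_le hB hB_disj hrow hs
  snd_le := Measure.le_iff.2 fun t ht => by
    calc (blockCoupling μ ν B C g).snd t
        = ∑ j, ∑ i, g i j * (μ[univ | B i] * ν[t | C j]) := by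
          rw [Measure.snd_apply ht, ← univ_prod, blockCoupling_prod, Finset.sum_comm]
      _ ≤ ∑ j, ∑ i, g i j * (1 * ν[t | C j]) := by gcongr; exact prob_le_one
      _ = ∑ j, (∑ i, g i j) * ν[t | C j] := by simp_rw [one_mul, Finset.sum_mul]
      _ ≤ ν t := sum_mul_cond_le hC hC_disj hcol ht

theorem blockCoupling_univ [IsFiniteMeasure μ] [IsFiniteMeasure ν]
    (hrow : ∀ i, ∑ j, g i j ≤ μ (B i)) (hcol : ∀ j, ∑ i, g i j ≤ ν (C j)) :
    blockCoupling μ ν B C g univ = ∑ i, ∑ j, g i j := by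
  rw [← univ_prod_univ, blockCoupling_prod]
  refine Finset.sum_congr rfl fun i _ => Finset.sum_congr rfl fun j _ => ?_
  rcases eq_or_ne (g i j) 0 with hg | hg
  · simp [hg]
  have hgB : g i j ≤ μ (B i) :=
    (Finset.single_le_sum_of_canonicallyOrdered (Finset.mem_univ j)).trans (hrow i)
  have hgC : g i j ≤ ν (C j) :=
    (Finset.single_le_sum_of_canonicallyOrdered (f := (g · j)) (Finset.mem_univ i)).trans (hcol j)
  have := ProbabilityTheory.cond_isProbabilityMeasure (hgB.trans_lt' (pos_of_ne_zero hg)).ne'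
  have := ProbabilityTheory.cond_isProbabilityMeasure (hgC.trans_lt' (pos_of_ne_zero hg)).ne'
  simp

theorem ae_blockCoupling_of_forall_mem (hB : ∀ i, MeasurableSet (B i))
    (hC : ∀ j, MeasurableSet (C j)) {P : X × Y → Prop}
    (hP : ∀ i j, g i j ≠ 0 → ∀ x ∈ B i, ∀ y ∈ C j, P (x, y)) :
    ∀ᵐ p ∂blockCoupling μ ν B C g, P p := by
  simp only [blockCoupling, ae_finsetSum_measure_iff]
  intro i _ j _
  rcases eq_or_ne (g i j) 0 with hg | hg
  · simp [hg]
  refine Measure.ae_smul_measure ?_ _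
  filter_upwards [Measure.quasiMeasurePreserving_fst.ae (ProbabilityTheory.ae_cond_mem (hB i)),
    Measure.quasiMeasurePreserving_snd.ae (ProbabilityTheory.ae_cond_mem (hC j))] with p hx hy
  exact hP i j hg p.1 hx p.2 hy

end BlockCoupling

section ApproximateStrassen

open Metric

variable {S : Type*} [PseudoMetricSpace S] [MeasurableSpace S]

open Classical in
theorem sum_measure_le_sum_measure_add_of_le_thickening {μ ν : Measure S} {ε : ℝ} {η δ : ℝ≥0∞}
    (h : ∀ A, MeasurableSet A → μ A ≤ ν (thickening ε A) + η) {ι : Type*} [Fintype ι]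
    {B : ι → Set S} (hB : ∀ i, MeasurableSet (B i)) (hB_disj : Pairwise (Function.onFun Disjoint B))
    (hδ : ν (⋃ i, B i)ᶜ ≤ δ) (s : Finset ι) :
    ∑ i ∈ s, μ (B i) ≤
      ∑ j with ∃ i ∈ s, ∃ x ∈ B i, ∃ y ∈ B j, dist x y < ε, ν (B j) + (η + δ) := by
  set t : Finset ι := {j | ∃ i ∈ s, ∃ x ∈ B i, ∃ y ∈ B j, dist x y < ε} with ht
  have hsub : thickening ε (⋃ i ∈ s, B i) ⊆ (⋃ j ∈ t, B j) ∪ (⋃ i, B i)ᶜ := by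
    intro y hy
    obtain ⟨x, hx, hxy⟩ := mem_thickening_iff.1 hy
    obtain ⟨i, hi, hxi⟩ := mem_iUnion₂.1 hx
    refine or_iff_not_imp_right.2 fun hy_mem => ?_
    obtain ⟨j, hyj⟩ := mem_iUnion.1 (not_not.1 hy_mem)
    have hj : j ∈ t := by simpa [ht] using ⟨i, hi, x, hxi, y, hyj, dist_comm y x ▸ hxy⟩
    exact mem_iUnion₂.2 ⟨j, hj, hyj⟩
  calc ∑ i ∈ s, μ (B i) = μ (⋃ i ∈ s, B i) :=
        (measure_biUnion_finset (fun i _ j _ hij => hB_disj hij) fun i _ => hB i).symm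
    _ ≤ ν (thickening ε (⋃ i ∈ s, B i)) + η := h _ (s.measurableSet_biUnion fun i _ => hB i)
    _ ≤ ν (⋃ j ∈ t, B j) + ν (⋃ i, B i)ᶜ + η := by
        gcongr; exact (measure_mono hsub).trans (measure_union_le _ _)
    _ ≤ ∑ j ∈ t, ν (B j) + δ + η := by gcongr; exact measure_biUnion_finset_le _ _
    _ = ∑ j ∈ t, ν (B j) + (η + δ) := by ring

variable [TopologicalSpace.SeparableSpace S] [OpensMeasurableSpace S]

theorem exists_finite_disjoint_family_dist_le_measure_compl_le (ρ : Measure S) [IsFiniteMeasure ρ]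
    {δ : ℝ≥0} (hδ : 0 < δ) :
    ∃ (n : ℕ) (B : Fin n → Set S), (∀ i, MeasurableSet (B i)) ∧
      Pairwise (Function.onFun Disjoint B) ∧ (∀ i, ∀ x ∈ B i, ∀ y ∈ B i, dist x y ≤ δ) ∧
      ρ (⋃ i, B i)ᶜ ≤ δ := by
  obtain ⟨A, hA_meas, hA_bdd, hA_diam, hA_cover, hA_disj⟩ :=
    SeparableSpace.exists_measurable_partition_diam_le S (NNReal.coe_pos.2 hδ)
  have htail := tendsto_measure_biUnion_Ici_zero_of_pairwise_disjoint (μ := ρ)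
    (fun i => (hA_meas i).nullMeasurableSet) hA_disj
  obtain ⟨n, hn⟩ := (htail.eventually_le_const (ENNReal.coe_pos.2 hδ)).exists
  refine ⟨n, fun i => A i, fun i => hA_meas i, fun i j hij => hA_disj (Fin.val_injective.ne hij),
    fun i x hx y hy => (dist_le_diam_of_mem (hA_bdd i) hx hy).trans (hA_diam i), ?_⟩
  refine (measure_mono fun x hx => ?_).trans hn
  obtain ⟨k, hk⟩ := iUnion_eq_univ_iff.1 hA_cover x
  exact mem_iUnion₂.2 ⟨k, not_lt.1 fun hkn => hx (mem_iUnion.2 ⟨⟨k, hkn⟩, hk⟩), hk⟩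

theorem exists_isSubcoupling_dist_le_of_le_thickening {μ ν : Measure S} [IsFiniteMeasure μ]
    [IsFiniteMeasure ν] {ε : ℝ} {η : ℝ≥0}
    (h : ∀ A, MeasurableSet A → μ A ≤ ν (thickening ε A) + η) {δ : ℝ≥0} (hδ : 0 < δ) :
    ∃ γ : Measure (S × S), IsSubcoupling γ μ ν ∧ (∀ᵐ p ∂γ, dist p.1 p.2 ≤ ε + δ) ∧
      μ univ ≤ γ univ + η + δ := by
  have hδ₃ : 0 < δ / 3 := by positivity
  obtain ⟨n, B, hB, hB_disj, hB_dist, hB_compl⟩ :=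
    exists_finite_disjoint_family_dist_le_measure_compl_le (μ + ν) hδ₃
  have hμ_compl : μ (⋃ i, B i)ᶜ ≤ (δ / 3 : ℝ≥0) := le_self_add.trans hB_compl
  have hν_compl : ν (⋃ i, B i)ᶜ ≤ (δ / 3 : ℝ≥0) := le_add_self.trans hB_compl
  obtain ⟨g, hg, hg_total⟩ := exists_nnreal_isTransportPlan
    (r := fun i j => ∃ x ∈ B i, ∃ y ∈ B j, dist x y < ε) (a := fun i => (μ (B i)).toNNReal)
    (b := fun j => (ν (B j)).toNNReal) (D := η + δ / 3)
    (fun s => by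
      rw [← ENNReal.coe_le_coe]
      simpa using
        sum_measure_le_sum_measure_add_of_le_thickening h hB hB_disj hν_compl s) hδ₃
  have hrow (i) : ∑ j, (g i j : ℝ≥0∞) ≤ μ (B i) := by
    simpa using ENNReal.coe_le_coe.2 (hg.row_sum_le i)
  have hcol (j) : ∑ i, (g i j : ℝ≥0∞) ≤ ν (B j) := by
    simpa using ENNReal.coe_le_coe.2 (hg.col_sum_le j)
  refine ⟨blockCoupling μ ν B B fun i j => g i j,
    isSubcoupling_blockCoupling hB hB_disj hB hB_disj hrow hcol,
    ae_blockCoupling_of_forall_mem hB hB fun i j hij x hx y hy => ?_, ?_⟩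
  · obtain ⟨x', hx', y', hy', hxy'⟩ := hg.rel_of_ne_zero i j (by simpa using hij)
    have hxx' := hB_dist i x hx x' hx'
    have hyy' := hB_dist j y' hy' y hy
    push_cast at hxx' hyy'
    linarith [dist_triangle4 x x' y' y, δ.coe_nonneg]
  · rw [blockCoupling_univ hrow hcol]
    calc μ univ ≤ μ (⋃ i, B i) + μ (⋃ i, B i)ᶜ := measure_univ_le_add_compl _
      _ ≤ ∑ i, μ (B i) + (δ / 3 : ℝ≥0) := by gcongr; exact measure_iUnion_fintype_le _ _
      _ ≤ ∑ i, ∑ j, (g i j : ℝ≥0∞) + (η + (δ / 3 : ℝ≥0)) + (δ / 3 : ℝ≥0) + (δ / 3 : ℝ≥0) := by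
        gcongr
        simpa using ENNReal.coe_le_coe.2 hg_total
      _ = ∑ i, ∑ j, (g i j : ℝ≥0∞) + η + δ := by
        norm_cast
        ring

end ApproximateStrassen

section Integral

variable {X E : Type*} [MeasurableSpace X] [NormedAddCommGroup E]

theorem integrable_of_continuous_of_norm_le [TopologicalSpace X] [OpensMeasurableSpace X]
    [SecondCountableTopologyEither X E] {μ : Measure X} [IsFiniteMeasure μ] {f : X → E}
    (hf : Continuous f) {C : ℝ} (hC : ∀ x, ‖f x‖ ≤ C) : Integrable f μ :=
  .of_bound hf.aestronglyMeasurable C (ae_of_all _ hC)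

theorem integrable_dist [PseudoMetricSpace X] [BoundedSpace X] [SecondCountableTopology X]
    [OpensMeasurableSpace X] (γ : Measure (X × X)) [IsFiniteMeasure γ] :
    Integrable (fun p => dist p.1 p.2) γ := by
  obtain ⟨C, hC⟩ := Metric.boundedSpace_iff.1 ‹BoundedSpace X›
  exact integrable_of_continuous_of_norm_le (C := C) (by fun_prop) fun p => by
    simpa using hC p.1 p.2

variable [NormedSpace ℝ E]

theorem norm_integral_sub_integral_le_of_le {μ ρ : Measure X} [IsFiniteMeasure μ] (hρ : ρ ≤ μ)
    {f : X → E} (hf : Integrable f μ) {C : ℝ} (hC : ∀ x, ‖f x‖ ≤ C) :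
    ‖∫ x, f x ∂μ - ∫ x, f x ∂ρ‖ ≤ C * (μ.real univ - ρ.real univ) := by
  have : IsFiniteMeasure ρ := isFiniteMeasure_of_le μ hρ
  have hsub : μ - ρ + ρ = μ := Measure.sub_add_cancel_of_le hρ
  have hintegral : ∫ x, f x ∂μ = ∫ x, f x ∂(μ - ρ) + ∫ x, f x ∂ρ := by
    rw [← integral_add_measure (hf.mono_measure Measure.sub_le) (hf.mono_measure hρ), hsub]
  have hmass : μ.real univ = (μ - ρ).real univ + ρ.real univ := by
    rw [← measureReal_add_apply, hsub]
  calc ‖∫ x, f x ∂μ - ∫ x, f x ∂ρ‖ = ‖∫ x, f x ∂(μ - ρ)‖ := by rw [hintegral, add_sub_cancel_right]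
    _ ≤ C * (μ - ρ).real univ := norm_integral_le_of_norm_le_const (ae_of_all _ hC)
    _ = C * (μ.real univ - ρ.real univ) := by rw [hmass, add_sub_cancel_right]

theorem norm_integral_fst_sub_integral_snd_le [PseudoMetricSpace X] {γ : Measure (X × X)}
    (hγ : Integrable (fun p => dist p.1 p.2) γ) {f : X → E} {K : ℝ≥0} (hf : LipschitzWith K f)
    (hfst : Integrable f γ.fst) (hsnd : Integrable f γ.snd) :
    ‖∫ x, f x ∂γ.fst - ∫ x, f x ∂γ.snd‖ ≤ K * ∫ p, dist p.1 p.2 ∂γ := by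
  rw [Measure.fst, Measure.snd,
    integral_map measurable_fst.aemeasurable hfst.aestronglyMeasurable,
    integral_map measurable_snd.aemeasurable hsnd.aestronglyMeasurable,
    ← integral_sub (f := fun p : X × X => f p.1) (g := fun p : X × X => f p.2)
      (hfst.comp_measurable measurable_fst) (hsnd.comp_measurable measurable_snd),
    ← integral_const_mul]
  exact norm_integral_le_of_norm_le (hγ.const_mul _)
    (ae_of_all _ fun p => by simpa [dist_eq_norm] using hf.dist_le_mul p.1 p.2)

theorem abs_integral_sub_integral_le {μ ν : Measure X} [IsFiniteMeasure μ] [IsFiniteMeasure ν]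
    {f : X → ℝ} {C : ℝ} (hC : ∀ x, |f x| ≤ C) :
    |∫ x, f x ∂μ - ∫ x, f x ∂ν| ≤ C * (μ.real univ + ν.real univ) := by
  have hbound (ρ : Measure X) [IsFiniteMeasure ρ] : |∫ x, f x ∂ρ| ≤ C * ρ.real univ := by
    rw [← Real.norm_eq_abs]
    exact norm_integral_le_of_norm_le_const (ae_of_all _ hC)
  exact (abs_sub _ _).trans ((add_le_add (hbound μ) (hbound ν)).trans_eq (mul_add _ _ _).symm)

end Integral

section UnbalancedWasserstein

theorem thicken_dist {S : Type*} [PseudoMetricSpace S] (ε : ℝ) (A : Set S) :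
    thicken dist ε A = Metric.thickening ε A := by
  ext y
  simp [thicken, Metric.mem_thickening_iff, dist_comm y]

variable {S : Type*} [PseudoMetricSpace S] [MeasurableSpace S] {μ ν : Measure S}

theorem uwAux_le_of_fst_le_of_snd_eq (hν : ν univ ≤ 1) {γ : Measure (S × S)} (hfst : γ.fst ≤ μ)
    (hsnd : γ.snd = ν) :
    uwAux dist μ ν ≤ μ.real univ - ν.real univ + ∫ p, dist p.1 p.2 ∂γ := by
  refine add_le_add le_rfl (csInf_le ⟨0, ?_⟩ ⟨γ, ?_, hfst, hsnd, rfl⟩)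
  · rintro _ ⟨γ, -, -, -, rfl⟩
    exact integral_nonneg fun p => dist_nonneg
  · rwa [← Measure.snd_univ, hsnd]

theorem le_uwAux_of_forall [IsFiniteMeasure μ] (hν : ν univ ≤ 1) (hle : ν univ ≤ μ univ) {c : ℝ}
    (h : ∀ γ : Measure (S × S), γ.fst ≤ μ → γ.snd = ν →
      c ≤ μ.real univ - ν.real univ + ∫ p, dist p.1 p.2 ∂γ) :
    c ≤ uwAux dist μ ν := by
  obtain ⟨γ₀, hγ₀_fst, hγ₀_snd⟩ := exists_fst_le_snd_eq hle
  refine sub_le_iff_le_add'.1 (le_csInf ⟨_, γ₀, ?_, hγ₀_fst, hγ₀_snd, rfl⟩ ?_)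
  · rwa [← Measure.snd_univ, hγ₀_snd]
  · rintro _ ⟨γ, -, hfst, hsnd, rfl⟩
    exact sub_le_iff_le_add'.2 (h γ hfst hsnd)

variable [TopologicalSpace.SeparableSpace S] [OpensMeasurableSpace S]

theorem IsSubcoupling.uwAux_le [IsFiniteMeasure μ] (hd : ∀ x y : S, dist x y ≤ 1)
    (hν : ν univ ≤ 1) (hle : ν univ ≤ μ univ) {γ : Measure (S × S)} (hγ : IsSubcoupling γ μ ν) :
    uwAux dist μ ν ≤ μ.real univ - γ.real univ + ∫ p, dist p.1 p.2 ∂γ := by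
  have := UniformSpace.secondCountable_of_separable S
  have : BoundedSpace S := Metric.boundedSpace_iff.2 ⟨1, hd⟩
  have : IsFiniteMeasure ν := ⟨hν.trans_lt ENNReal.one_lt_top⟩
  obtain ⟨ρ, hfst, hsnd⟩ := hγ.exists_add_fst_le_snd_eq hle
  have : IsFiniteMeasure (γ + ρ) := ⟨by
    rw [← Measure.snd_univ, hsnd]; exact measure_lt_top ν univ⟩
  have : IsFiniteMeasure γ := isFiniteMeasure_of_le _ (Measure.le_add_right le_rfl : γ ≤ γ + ρ)
  have : IsFiniteMeasure ρ := isFiniteMeasure_of_le _ (Measure.le_add_left le_rfl : ρ ≤ γ + ρ)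
  have hmass : ν.real univ = γ.real univ + ρ.real univ := by
    rw [← measureReal_add_apply, ← hsnd]
    exact congrArg ENNReal.toReal Measure.snd_univ
  have hρ_cost : ∫ p, dist p.1 p.2 ∂ρ ≤ ρ.real univ := by
    simpa using integral_mono (integrable_dist ρ) (integrable_const 1) fun p => hd p.1 p.2
  calc uwAux dist μ ν ≤ μ.real univ - ν.real univ + ∫ p, dist p.1 p.2 ∂(γ + ρ) :=
        uwAux_le_of_fst_le_of_snd_eq hν hfst hsnd
    _ = μ.real univ - γ.real univ - ρ.real univ +
        (∫ p, dist p.1 p.2 ∂γ + ∫ p, dist p.1 p.2 ∂ρ) := by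
      rw [integral_add_measure (integrable_dist γ) (integrable_dist ρ), hmass, sub_sub]
    _ ≤ μ.real univ - γ.real univ + ∫ p, dist p.1 p.2 ∂γ := by linarith

theorem uwAux_le_add_of_le_thickening [IsFiniteMeasure μ] (hd : ∀ x y : S, dist x y ≤ 1)
    (hν : ν univ ≤ 1) (hle : ν univ ≤ μ univ) {ε : ℝ} (hε : 0 ≤ ε) {η : ℝ≥0}
    (h : ∀ A, MeasurableSet A → μ A ≤ ν (Metric.thickening ε A) + η) :
    uwAux dist μ ν ≤ ε + η := by
  have := UniformSpace.secondCountable_of_separable S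
  have : BoundedSpace S := Metric.boundedSpace_iff.2 ⟨1, hd⟩
  have : IsFiniteMeasure ν := ⟨hν.trans_lt ENNReal.one_lt_top⟩
  refine le_of_forall_pos_le_add fun δ hδ => ?_
  lift δ to ℝ≥0 using hδ.le
  obtain ⟨γ, hγ, hγ_dist, hγ_mass⟩ :=
    exists_isSubcoupling_dist_le_of_le_thickening h (half_pos (NNReal.coe_pos.1 hδ))
  have : IsFiniteMeasure γ := ⟨hγ.measure_univ_le_left.trans_lt (measure_lt_top μ univ)⟩
  have hγ_le_one : γ.real univ ≤ 1 :=
    ENNReal.toReal_mono ENNReal.one_ne_top (hγ.measure_univ_le_right.trans hν)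
  have hmass : μ.real univ ≤ γ.real univ + η + (δ / 2 : ℝ≥0) := by
    have := ENNReal.toReal_mono (by finiteness) hγ_mass
    rwa [ENNReal.toReal_add (by finiteness) (by finiteness),
      ENNReal.toReal_add (by finiteness) (by finiteness)] at this
  have hcost : ∫ p, dist p.1 p.2 ∂γ ≤ ε + (δ / 2 : ℝ≥0) := by
    calc ∫ p, dist p.1 p.2 ∂γ ≤ ∫ _, (ε + (δ / 2 : ℝ≥0)) ∂γ :=
          integral_mono_ae (integrable_dist γ) (integrable_const _) hγ_dist
      _ = γ.real univ * (ε + (δ / 2 : ℝ≥0)) := by simp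
      _ ≤ ε + (δ / 2 : ℝ≥0) := mul_le_of_le_one_left (by positivity) hγ_le_one
  calc uwAux dist μ ν ≤ μ.real univ - γ.real univ + ∫ p, dist p.1 p.2 ∂γ :=
        hγ.uwAux_le hd hν hle
    _ ≤ ε + η + δ := by push_cast at hmass hcost; linarith

theorem uwDist_le_two_mul_prokhorovDist (hd : ∀ x y : S, dist x y ≤ 1) (hμ : μ univ ≤ 1)
    (hν : ν univ ≤ 1) : uwDist dist μ ν ≤ 2 * prokhorovDist dist μ ν := by
  have : IsFiniteMeasure μ := ⟨hμ.trans_lt ENNReal.one_lt_top⟩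
  have : IsFiniteMeasure ν := ⟨hν.trans_lt ENNReal.one_lt_top⟩
  rw [← div_le_iff₀' two_pos]
  refine le_csInf ⟨1, one_pos, fun A _ => ?_⟩ ?_
  · rw [ENNReal.ofReal_one]
    exact ⟨le_add_left ((measure_mono (subset_univ A)).trans hμ),
      le_add_left ((measure_mono (subset_univ A)).trans hν)⟩
  rintro ε ⟨hε, h⟩
  simp only [thicken_dist] at h
  have hε_eq : ε + ε.toNNReal = 2 * ε := by rw [Real.coe_toNNReal ε hε.le, two_mul]
  rw [div_le_iff₀' two_pos, ← hε_eq, uwDist]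
  split_ifs with hle
  · exact uwAux_le_add_of_le_thickening hd hν hle hε.le fun A hA => (h A hA).1
  · exact uwAux_le_add_of_le_thickening hd hμ (not_le.1 hle).le hε.le fun A hA => (h A hA).2

end UnbalancedWasserstein

section KantorovichRubinshtein

theorem abs_integral_sub_integral_le_uwAux {S : Type*} [PseudoMetricSpace S] [BoundedSpace S]
    [SecondCountableTopology S] [MeasurableSpace S] [OpensMeasurableSpace S] {μ ν : Measure S}
    [IsFiniteMeasure μ] (hν : ν univ ≤ 1) (hle : ν univ ≤ μ univ) {f : S → ℝ}
    (hf : LipschitzWith 1 f) (hf_le : ∀ x, |f x| ≤ 1) :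
    |∫ x, f x ∂μ - ∫ x, f x ∂ν| ≤ uwAux dist μ ν := by
  refine le_uwAux_of_forall hν hle fun γ hfst hsnd => ?_
  have : IsFiniteMeasure γ := ⟨by
    rw [← Measure.snd_univ, hsnd]; exact hν.trans_lt ENNReal.one_lt_top⟩
  have hf_int (ρ : Measure S) [IsFiniteMeasure ρ] : Integrable f ρ :=
    integrable_of_continuous_of_norm_le hf.continuous hf_le
  have hfst_mass : γ.fst.real univ = ν.real univ := by
    simp only [measureReal_def, ← hsnd, Measure.fst_univ, Measure.snd_univ]
  have hleftover : |∫ x, f x ∂μ - ∫ x, f x ∂γ.fst| ≤ μ.real univ - ν.real univ := by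
    simpa [hfst_mass] using norm_integral_sub_integral_le_of_le hfst (hf_int μ) hf_le
  have htransport : |∫ x, f x ∂γ.fst - ∫ x, f x ∂ν| ≤ ∫ p, dist p.1 p.2 ∂γ := by
    simpa [hsnd] using norm_integral_fst_sub_integral_snd_le (integrable_dist γ) hf
      (hf_int γ.fst) (hf_int γ.snd)
  exact (abs_sub_le _ _ _).trans (add_le_add hleftover htransport)

theorem krDist_le_uwDist {S : Type} [MetricSpace S] [BoundedSpace S] [SecondCountableTopology S]
    [MeasurableSpace S] [OpensMeasurableSpace S] {μ ν : Measure S} (hμ : μ univ ≤ 1)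
    (hν : ν univ ≤ 1) : krDist μ ν ≤ uwDist dist μ ν := by
  have : IsFiniteMeasure μ := ⟨hμ.trans_lt ENNReal.one_lt_top⟩
  have : IsFiniteMeasure ν := ⟨hν.trans_lt ENNReal.one_lt_top⟩
  refine csSup_le ⟨_, fun _ => 0, .const' 0, by simp, rfl⟩ ?_
  rintro _ ⟨f, hf, hf_le, rfl⟩
  rw [uwDist]
  split_ifs with hle
  · exact abs_integral_sub_integral_le_uwAux hν hle hf hf_le
  · rw [abs_sub_comm]
    exact abs_integral_sub_integral_le_uwAux hμ (not_le.1 hle).le hf hf_le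

end KantorovichRubinshtein

section BoundedLipschitz

variable {S : Type} [MetricSpace S] [MeasurableSpace S] {μ ν : Measure S}

theorem blDist_comm (μ ν : Measure S) : blDist μ ν = blDist ν μ := by
  simp only [blDist, abs_sub_comm]

theorem blDist_le_of_forall {c : ℝ} (h : ∀ (f : S → ℝ) (a b : ℝ≥0), LipschitzWith a f →
      (∀ x, |f x| ≤ b) → (a : ℝ) + b ≤ 1 → |∫ x, f x ∂μ - ∫ x, f x ∂ν| ≤ c) :
    blDist μ ν ≤ c := by
  refine csSup_le ⟨_, fun _ => 0, 0, 0, .const 0, by simp, by simp, rfl⟩ ?_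
  rintro _ ⟨f, a, b, hf, hf_le, hab, rfl⟩
  exact h f a b hf hf_le hab

variable [IsFiniteMeasure μ] [IsFiniteMeasure ν]

theorem abs_integral_sub_integral_le_blDist {f : S → ℝ} {a b : ℝ≥0} (hf : LipschitzWith a f)
    (hf_le : ∀ x, |f x| ≤ b) (hab : (a : ℝ) + b ≤ 1) :
    |∫ x, f x ∂μ - ∫ x, f x ∂ν| ≤ blDist μ ν := by
  refine le_csSup ⟨1 * (μ.real univ + ν.real univ), ?_⟩ ⟨f, a, b, hf, hf_le, hab, rfl⟩
  rintro _ ⟨f, a, b, -, hf_le, hab, rfl⟩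
  exact abs_integral_sub_integral_le fun x => (hf_le x).trans (by linarith [a.coe_nonneg])

theorem abs_integral_sub_integral_le_krDist {f : S → ℝ} (hf : LipschitzWith 1 f)
    (hf_le : ∀ x, |f x| ≤ 1) : |∫ x, f x ∂μ - ∫ x, f x ∂ν| ≤ krDist μ ν := by
  refine le_csSup ⟨1 * (μ.real univ + ν.real univ), ?_⟩ ⟨f, hf, hf_le, rfl⟩
  rintro _ ⟨f, -, hf_le, rfl⟩
  exact abs_integral_sub_integral_le hf_le

theorem blDist_le_krDist : blDist μ ν ≤ krDist μ ν :=
  blDist_le_of_forall fun f a b hf hf_le hab => abs_integral_sub_integral_le_krDist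
    (hf.weaken (NNReal.coe_le_coe.1 (by push_cast; linarith [b.coe_nonneg])))
    fun x => (hf_le x).trans (by linarith [a.coe_nonneg])

theorem blDist_nonneg : 0 ≤ blDist μ ν :=
  (abs_nonneg _).trans
    (abs_integral_sub_integral_le_blDist (f := fun _ => 0) (a := 0) (b := 0) (.const 0)
      (by simp) (by simp))

theorem blDist_le_measureReal_add : blDist μ ν ≤ μ.real univ + ν.real univ :=
  blDist_le_of_forall fun f a b _ hf_le hab => by
    simpa using abs_integral_sub_integral_le (μ := μ) (ν := ν) (f := f) (C := 1)
      fun x => (hf_le x).trans (by linarith [a.coe_nonneg])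

theorem abs_integral_sub_integral_le_mul_blDist {f : S → ℝ} {L M : ℝ≥0} (hf : LipschitzWith L f)
    (hf_le : ∀ x, |f x| ≤ M) : |∫ x, f x ∂μ - ∫ x, f x ∂ν| ≤ (L + M) * blDist μ ν := by
  rcases eq_zero_or_pos (L + M) with hLM | hLM
  · obtain ⟨-, rfl⟩ := add_eq_zero.1 hLM
    have hf_zero (x) : f x = 0 := by simpa using hf_le x
    simpa [hf_zero] using mul_nonneg L.coe_nonneg blDist_nonneg
  set c : ℝ≥0 := (L + M)⁻¹ with hc
  have hcf : LipschitzWith (c * L) fun x => (c : ℝ) * f x := by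
    simpa [Function.comp_def] using (lipschitzWith_smul (c : ℝ)).comp hf
  have hcf_le (x) : |(c : ℝ) * f x| ≤ (c * M : ℝ≥0) := by
    rw [abs_mul, NNReal.abs_eq, NNReal.coe_mul]
    gcongr
    exact hf_le x
  have hcLM : ((c * L : ℝ≥0) : ℝ) + (c * M : ℝ≥0) ≤ 1 := by
    rw [← NNReal.coe_add, ← mul_add, inv_mul_cancel₀ hLM.ne', NNReal.coe_one]
  have hscaled := abs_integral_sub_integral_le_blDist (μ := μ) (ν := ν) hcf hcf_le hcLM
  rw [integral_const_mul, integral_const_mul, ← mul_sub, abs_mul, NNReal.abs_eq, hc,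
    NNReal.coe_inv, inv_mul_le_iff₀ (NNReal.coe_pos.2 hLM), NNReal.coe_add] at hscaled
  exact hscaled

end BoundedLipschitz

section Prokhorov

open Metric

section ThickenedIndicator

variable {S : Type*} [PseudoEMetricSpace S] [MeasurableSpace S] [OpensMeasurableSpace S]
  {μ : Measure S} [IsFiniteMeasure μ] {ε : ℝ} {A : Set S}

theorem measureReal_le_integral_thickenedIndicator (hε : 0 < ε) (hA : MeasurableSet A) :
    μ.real A ≤ ∫ x, (thickenedIndicator hε A x : ℝ) ∂μ := by
  rw [← integral_indicator_one hA]
  refine integral_mono ((integrable_const 1).indicator hA) (integrable_thickenedIndicator A hε)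
    (indicator_le' (fun x hx => ?_) fun x _ => NNReal.coe_nonneg _)
  simp [thickenedIndicator_one hε A hx]

theorem integral_thickenedIndicator_le_measureReal_thickening (hε : 0 < ε) :
    ∫ x, (thickenedIndicator hε A x : ℝ) ∂μ ≤ μ.real (thickening ε A) := by
  rw [← integral_indicator_one isOpen_thickening.measurableSet]
  refine integral_mono (integrable_thickenedIndicator A hε)
    ((integrable_const 1).indicator isOpen_thickening.measurableSet)
    (le_indicator (fun x _ => ?_) fun x hx => ?_)
  · exact_mod_cast thickenedIndicator_le_one hε A x
  · simp [thickenedIndicator_zero hε A hx]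

end ThickenedIndicator

variable {S : Type} [MetricSpace S] [MeasurableSpace S] [OpensMeasurableSpace S]
  {μ ν : Measure S}

theorem measureReal_le_measureReal_thickening_add [IsFiniteMeasure μ] [IsFiniteMeasure ν] {ε : ℝ}
    (hε : 0 < ε) {A : Set S} (hA : MeasurableSet A) :
    μ.real A ≤ ν.real (thickening ε A) + (ε⁻¹ + 1) * blDist μ ν := by
  let f : S → ℝ := fun x => thickenedIndicator hε A x
  have hf : LipschitzWith ε.toNNReal⁻¹ f := lipschitzWith_thickenedIndicator hε A
  have hf_le (x) : |f x| ≤ (1 : ℝ≥0) := by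
    rw [NNReal.abs_eq]
    exact_mod_cast thickenedIndicator_le_one hε A x
  have hbl : |∫ x, f x ∂μ - ∫ x, f x ∂ν| ≤ (ε⁻¹ + 1) * blDist μ ν := by
    simpa [hε.le] using abs_integral_sub_integral_le_mul_blDist (μ := μ) (ν := ν) hf hf_le
  calc μ.real A ≤ ∫ x, f x ∂μ := measureReal_le_integral_thickenedIndicator hε hA
    _ ≤ ∫ x, f x ∂ν + (ε⁻¹ + 1) * blDist μ ν :=
      sub_le_iff_le_add'.1 ((le_abs_self _).trans hbl)
    _ ≤ ν.real (thickening ε A) + (ε⁻¹ + 1) * blDist μ ν := by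
      gcongr
      exact integral_thickenedIndicator_le_measureReal_thickening hε

theorem prokhorovDist_le_of_mul_blDist_le [IsFiniteMeasure μ] [IsFiniteMeasure ν] {ε : ℝ}
    (hε : 0 < ε) (h : (ε⁻¹ + 1) * blDist μ ν ≤ ε) : prokhorovDist dist μ ν ≤ ε := by
  have hthick {μ ν : Measure S} [IsFiniteMeasure μ] [IsFiniteMeasure ν]
      (h : (ε⁻¹ + 1) * blDist μ ν ≤ ε) {A : Set S} (hA : MeasurableSet A) :
      μ A ≤ ν (thicken dist ε A) + ENNReal.ofReal ε := by
    rw [thicken_dist, ← ofReal_measureReal (μ := μ), ← ofReal_measureReal (μ := ν),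
      ← ENNReal.ofReal_add measureReal_nonneg hε.le]
    exact ENNReal.ofReal_le_ofReal ((measureReal_le_measureReal_thickening_add hε hA).trans
      (by gcongr))
  exact csInf_le ⟨0, fun _ hr => hr.1.le⟩
    ⟨hε, fun A hA => ⟨hthick h hA, hthick (blDist_comm μ ν ▸ h) hA⟩⟩

theorem inv_add_one_mul_le_of_two_mul_sqrt_le {β ε : ℝ} (hβ : 0 ≤ β) (hβ_le : β ≤ 2) (hε : 0 < ε)
    (h : 2 * √β ≤ ε) : (ε⁻¹ + 1) * β ≤ ε := by
  have hsq : β ≤ ε ^ 2 / 4 := by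
    nlinarith [Real.sq_sqrt hβ, Real.sqrt_nonneg β]
  have hlin : β ≤ 3 / 4 * ε := by
    nlinarith [Real.sq_sqrt hβ, Real.sqrt_nonneg β]
  have hinv : ε⁻¹ * β ≤ ε / 4 := by
    rw [inv_mul_le_iff₀ hε]; linarith
  linarith

theorem prokhorovDist_le_two_mul_sqrt_blDist (hμ : μ univ ≤ 1) (hν : ν univ ≤ 1) :
    prokhorovDist dist μ ν ≤ 2 * √(blDist μ ν) := by
  have : IsFiniteMeasure μ := ⟨hμ.trans_lt ENNReal.one_lt_top⟩
  have : IsFiniteMeasure ν := ⟨hν.trans_lt ENNReal.one_lt_top⟩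
  have hbl_le : blDist μ ν ≤ 2 := by
    have hμ_real : μ.real univ ≤ 1 := ENNReal.toReal_mono ENNReal.one_ne_top hμ
    have hν_real : ν.real univ ≤ 1 := ENNReal.toReal_mono ENNReal.one_ne_top hν
    linarith [blDist_le_measureReal_add (μ := μ) (ν := ν)]
  refine le_of_forall_pos_le_add fun η hη => ?_
  have hε : 0 < 2 * √(blDist μ ν) + η := by positivity
  exact prokhorovDist_le_of_mul_blDist_le hε
    (inv_add_one_mul_le_of_two_mul_sqrt_le blDist_nonneg hbl_le hε (by linarith))

end Prokhorov

theorem bl_kr_w_prokhorov_inequalities_general {S : Type} [MetricSpace S]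
    [TopologicalSpace.SeparableSpace S] [MeasurableSpace S] [OpensMeasurableSpace S]
    (hd : ∀ x y : S, dist x y ≤ 1)
    (μ ν : Measure S) (hμ : μ Set.univ ≤ 1) (hν : ν Set.univ ≤ 1) :
    blDist μ ν ≤ krDist μ ν ∧
    krDist μ ν ≤ uwDist dist μ ν ∧
    uwDist dist μ ν ≤ 2 * prokhorovDist dist μ ν ∧
    2 * prokhorovDist dist μ ν ≤ 4 * Real.sqrt (blDist μ ν) := by
  have := UniformSpace.secondCountable_of_separable S
  have : BoundedSpace S := Metric.boundedSpace_iff.2 ⟨1, hd⟩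
  have : IsFiniteMeasure μ := ⟨hμ.trans_lt ENNReal.one_lt_top⟩
  have : IsFiniteMeasure ν := ⟨hν.trans_lt ENNReal.one_lt_top⟩
  refine ⟨blDist_le_krDist, krDist_le_uwDist hμ hν, uwDist_le_two_mul_prokhorovDist hd hμ hν, ?_⟩
  linarith [prokhorovDist_le_two_mul_sqrt_blDist hμ hν]

/-- On a complete separable metric space of diameter at most one, for all Borel
measures `μ, ν` of total mass at most one:
`BL(μ,ν) ≤ K(μ,ν) ≤ W(μ,ν) ≤ 2·P(μ,ν) ≤ 4·√(BL(μ,ν))`. -/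
theorem bl_kr_w_prokhorov_inequalities {S : Type} [MetricSpace S] [CompleteSpace S]
    [TopologicalSpace.SeparableSpace S] [MeasurableSpace S] [BorelSpace S]
    (hd : ∀ x y : S, dist x y ≤ 1)
    (μ ν : Measure S) (hμ : μ Set.univ ≤ 1) (hν : ν Set.univ ≤ 1) :
    blDist μ ν ≤ krDist μ ν ∧
    krDist μ ν ≤ uwDist dist μ ν ∧
    uwDist dist μ ν ≤ 2 * prokhorovDist dist μ ν ∧
    2 * prokhorovDist dist μ ν ≤ 4 * Real.sqrt (blDist μ ν) := by
  exact bl_kr_w_prokhorov_inequalities_general hd μ ν hμ hν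

end
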